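/- Let π and π* be two stationary policies for a finite entropy-regularized MDP with discount γ ∈ [0,1). Then the discounted sum of advantages of π evaluated along trajectories of π* telescopes: E_{τ∼π*}[ Σ_{t=0}^∞ γ^t A^π(s_t,a_t) ] = E_{τ∼π*}[ Σ_{t=0}^∞ γ^t r(s_t,a_t) ] − E_{s_0∼μ}[ V^π(s_0) ]. -/

import Mathlib

/-! The identity holds with any function `V : S → ℝ` in place of `V^π`. Write `c t` for
`γ ^ t * E[V (s_t)]`, the expectation being over trajectories of `πstar`. By the Markov property
(`expAt_succ_state`), `γ * E[∑ y, P (y | s_t, a_t) * V y] = γ * E[V (s_{t+1})]`, so the `t`-th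
discounted expected advantage is `γ ^ t * E[r (s_t, a_t)] + (c (t + 1) - c t)`. Expectations of a
function on the finite set `S × A` are bounded uniformly in `t` (`abs_expAt_le`), hence every
discounted series is dominated by a geometric one, and the telescoping part sums to
`-c 0 = -E[V (s_0)]`. -/

open scoped BigOperators

/-- `p` is a probability distribution on the finite type `α`. -/
def IsProb {α : Type*} [Fintype α] (p : α → ℝ) : Prop :=
  (∀ x, 0 ≤ p x) ∧ ∑ x, p x = 1

/-- Shannon entropy of a finite distribution.  The convention `0 * log 0 = 0`
holds automatically since `Real.log 0 = 0`. -/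
noncomputable def entropy {α : Type*} [Fintype α] (p : α → ℝ) : ℝ :=
  -∑ x, p x * Real.log (p x)

/-- Distribution of the state `s_t` at time `t` of a trajectory generated by
the stationary policy `π` in the MDP with transition kernel `P`, started from
the initial state distribution `μ`. -/
noncomputable def stateDist {S A : Type*} [Fintype S] [Fintype A]
    (P : S → A → S → ℝ) (π : S → A → ℝ) (μ : S → ℝ) : ℕ → S → ℝ
  | 0 => μ
  | t + 1 => fun s' => ∑ s, ∑ a, stateDist P π μ t s * π s a * P s a s'

/-- `E_{τ ∼ π}[ g (s_t, a_t) ]` for a trajectory generated by the stationary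
policy `π` (with transition kernel `P`), started from `s₀ ∼ μ`. -/
noncomputable def expAt {S A : Type*} [Fintype S] [Fintype A]
    (P : S → A → S → ℝ) (π : S → A → ℝ) (μ : S → ℝ) (t : ℕ) (g : S → A → ℝ) : ℝ :=
  ∑ s, stateDist P π μ t s * ∑ a, π s a * g s a

/-- The Dirac distribution concentrated at the state `s`. -/
def dirac {S : Type*} [DecidableEq S] (s : S) : S → ℝ :=
  fun s' => if s' = s then 1 else 0

/-- Entropy-regularized (`γ`-discounted) value function:
`V^π(s) = E[ ∑ₜ γ^t (r(s_t,a_t) + ε h^π_{s_t}) | s₀ = s ]`. -/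
noncomputable def valueV {S A : Type*} [Fintype S] [Fintype A] [DecidableEq S]
    (P : S → A → S → ℝ) (r : S → A → ℝ) (π : S → A → ℝ) (ε γ : ℝ) (s : S) : ℝ :=
  ∑' t : ℕ, γ ^ t * expAt P π (dirac s) t (fun s' a => r s' a + ε * entropy (π s'))

/-- Entropy-regularized Q-function: `Q^π(s,a) = r(s,a) + γ E_{s' ∼ P(·|s,a)}[V^π(s')]`. -/
noncomputable def valueQ {S A : Type*} [Fintype S] [Fintype A] [DecidableEq S]
    (P : S → A → S → ℝ) (r : S → A → ℝ) (π : S → A → ℝ) (ε γ : ℝ) (s : S) (a : A) : ℝ :=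
  r s a + γ * ∑ s', P s a s' * valueV P r π ε γ s'

/-- Advantage function `A^π(s,a) = Q^π(s,a) - V^π(s)`. -/
noncomputable def adv {S A : Type*} [Fintype S] [Fintype A] [DecidableEq S]
    (P : S → A → S → ℝ) (r : S → A → ℝ) (π : S → A → ℝ) (ε γ : ℝ) (s : S) (a : A) : ℝ :=
  valueQ P r π ε γ s a - valueV P r π ε γ s

lemma stateDist_isProb {S A : Type*} [Fintype S] [Fintype A]
    {P : S → A → S → ℝ} {π : S → A → ℝ} {μ : S → ℝ}
    (hP : ∀ s a, IsProb (P s a)) (hπ : ∀ s, IsProb (π s)) (hμ : IsProb μ) (t : ℕ) :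
    IsProb (stateDist P π μ t) := by
  induction t with
  | zero => exact hμ
  | succ t ih =>
    refine ⟨fun s' => Finset.sum_nonneg fun s _ => Finset.sum_nonneg fun a _ =>
      mul_nonneg (mul_nonneg (ih.1 s) ((hπ s).1 a)) ((hP s a).1 s'), ?_⟩
    simp only [stateDist]
    rw [Finset.sum_comm]
    calc ∑ s, ∑ s', ∑ a, stateDist P π μ t s * π s a * P s a s'
        = ∑ s, stateDist P π μ t s := Finset.sum_congr rfl fun s _ => by
          rw [Finset.sum_comm]
          simp only [← Finset.mul_sum, (hP s _).2, mul_one, (hπ s).2]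
      _ = 1 := ih.2

lemma IsProb.le_one {α : Type*} [Fintype α] {p : α → ℝ} (hp : IsProb p) (x : α) : p x ≤ 1 :=
  hp.2 ▸ Finset.single_le_sum (fun y _ => hp.1 y) (Finset.mem_univ x)

/-- The bound is crude, but it does not depend on `t`. -/
lemma abs_expAt_le {S A : Type*} [Fintype S] [Fintype A]
    {P : S → A → S → ℝ} {π : S → A → ℝ} {μ : S → ℝ}
    (hP : ∀ s a, IsProb (P s a)) (hπ : ∀ s, IsProb (π s)) (hμ : IsProb μ) (t : ℕ)
    (g : S → A → ℝ) : |expAt P π μ t g| ≤ ∑ s, ∑ a, |g s a| := by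
  have hd := stateDist_isProb hP hπ hμ t
  refine (Finset.abs_sum_le_sum_abs _ _).trans (Finset.sum_le_sum fun s _ => ?_)
  rw [abs_mul, abs_of_nonneg (hd.1 s)]
  refine (mul_le_of_le_one_left (abs_nonneg _) (hd.le_one s)).trans ?_
  refine (Finset.abs_sum_le_sum_abs _ _).trans (Finset.sum_le_sum fun a _ => ?_)
  rw [abs_mul, abs_of_nonneg ((hπ s).1 a)]
  exact mul_le_of_le_one_left (abs_nonneg _) ((hπ s).le_one a)

lemma summable_discounted_expAt {S A : Type*} [Fintype S] [Fintype A]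
    {P : S → A → S → ℝ} {π : S → A → ℝ} {μ : S → ℝ} {γ : ℝ}
    (hP : ∀ s a, IsProb (P s a)) (hπ : ∀ s, IsProb (π s)) (hμ : IsProb μ)
    (hγ0 : 0 ≤ γ) (hγ1 : γ < 1) (g : S → A → ℝ) :
    Summable fun t : ℕ => γ ^ t * expAt P π μ t g := by
  refine Summable.of_norm_bounded
    ((summable_geometric_of_lt_one hγ0 hγ1).mul_right (∑ s, ∑ a, |g s a|)) fun t => ?_
  rw [Real.norm_eq_abs, abs_mul, abs_of_nonneg (pow_nonneg hγ0 t)]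
  exact mul_le_mul_of_nonneg_left (abs_expAt_le hP hπ hμ t g) (pow_nonneg hγ0 t)

lemma expAt_state {S A : Type*} [Fintype S] [Fintype A]
    {P : S → A → S → ℝ} {π : S → A → ℝ} {μ : S → ℝ} (hπ : ∀ s, IsProb (π s)) (t : ℕ)
    (V : S → ℝ) : expAt P π μ t (fun s _ => V s) = ∑ s, stateDist P π μ t s * V s := by
  simp only [expAt, ← Finset.sum_mul, (hπ _).2, one_mul]

/-- Markov property: the law of `s_{t+1}` given `(s_t, a_t)` is `P s_t a_t`. -/
lemma expAt_succ_state {S A : Type*} [Fintype S] [Fintype A]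
    {P : S → A → S → ℝ} {π : S → A → ℝ} {μ : S → ℝ} (hπ : ∀ s, IsProb (π s)) (t : ℕ)
    (V : S → ℝ) : expAt P π μ (t + 1) (fun s _ => V s) =
      expAt P π μ t (fun s a => ∑ s', P s a s' * V s') := by
  rw [expAt_state hπ]
  simp only [stateDist, expAt, Finset.sum_mul, Finset.mul_sum]
  rw [Finset.sum_comm]
  refine Finset.sum_congr rfl fun s _ => ?_
  rw [Finset.sum_comm]
  exact Finset.sum_congr rfl fun a _ => Finset.sum_congr rfl fun s' _ => by ring

lemma expAt_bellman_residual {S A : Type*} [Fintype S] [Fintype A]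
    (P : S → A → S → ℝ) (π : S → A → ℝ) (μ : S → ℝ) (t : ℕ) (γ : ℝ) (f g h : S → A → ℝ) :
    expAt P π μ t (fun s a => f s a + γ * g s a - h s a) =
      expAt P π μ t f + γ * expAt P π μ t g - expAt P π μ t h := by
  simp only [expAt, Finset.mul_sum, ← Finset.sum_add_distrib, ← Finset.sum_sub_distrib]
  exact Finset.sum_congr rfl fun s _ => Finset.sum_congr rfl fun a _ => by ring

/-- **Telescoping of discounted advantages along demonstration trajectories**:
`E_{τ∼π*}[∑ γ^t A^π(s_t,a_t)] = E_{τ∼π*}[∑ γ^t r(s_t,a_t)] − E_{s₀∼μ}[V^π(s₀)]`. -/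
theorem advantage_telescope_discounted {S A : Type*} [Fintype S] [Fintype A] [DecidableEq S]
    [Nonempty S] [Nonempty A]
    (P : S → A → S → ℝ) (r : S → A → ℝ) (μ : S → ℝ) (π πstar : S → A → ℝ) (ε γ : ℝ)
    (hP : ∀ s a, IsProb (P s a)) (hπ : ∀ s, IsProb (π s)) (hπstar : ∀ s, IsProb (πstar s))
    (hμ : IsProb μ) (hε : 0 < ε) (hγ0 : 0 ≤ γ) (hγ1 : γ < 1) :
    ∑' t : ℕ, γ ^ t * expAt P πstar μ t (fun s a => adv P r π ε γ s a) =
      (∑' t : ℕ, γ ^ t * expAt P πstar μ t r) - ∑ s, μ s * valueV P r π ε γ s := by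
  set V := valueV P r π ε γ with hV
  set c : ℕ → ℝ := fun t => γ ^ t * expAt P πstar μ t (fun s _ => V s) with hc
  have hterm : ∀ t : ℕ, γ ^ t * expAt P πstar μ t (fun s a => adv P r π ε γ s a) =
      γ ^ t * expAt P πstar μ t r + (c (t + 1) - c t) := fun t => by
    simp only [adv, valueQ, ← hV, hc]
    rw [expAt_bellman_residual P πstar μ t γ r (fun s a => ∑ s', P s a s' * V s')
      (fun s _ => V s), expAt_succ_state hπstar]
    ring
  have hsr := summable_discounted_expAt hP hπstar hμ hγ0 hγ1 r
  have hsc : Summable c := summable_discounted_expAt hP hπstar hμ hγ0 hγ1 _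
  have hsc' : Summable fun t => c (t + 1) := (summable_nat_add_iff 1).2 hsc
  have hc0 : c 0 = ∑ s, μ s * V s := by
    simp only [hc, pow_zero, one_mul, expAt_state hπstar, stateDist]
  rw [tsum_congr hterm, hsr.tsum_add (hsc'.sub hsc), hsc'.tsum_sub hsc,
    hsc.tsum_eq_zero_add, hc0]
  ring
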